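/- For finitely generated groups G and H, the rank of the free product G ∗ H (the minimal cardinality of a generating set) equals the rank of G plus the rank of H; in the paper's notation, n(G ⋆ H) = n(G) + n(H). -/

import Mathlib

open Monoid

/-- The rank of a group: the smallest cardinality of a (finite) generating set. -/
noncomputable def grpRank (G : Type*) [Group G] : ℕ :=
  sInf {k : ℕ | ∃ S : Finset G, S.card = k ∧ Subgroup.closure (S : Set G) = ⊤}

/-- The subgroupoid of `ℕ × G × ℕ` generated by a family of labelled arrows. -/
inductive GrGen {G : Type*} [Group G] (A : ℕ → G → ℕ → Prop) : ℕ → G → ℕ → Prop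
  | of {u g v} : A u g v → GrGen A u g v
  | one (u) : GrGen A u 1 u
  | inv {u g v} : GrGen A u g v → GrGen A v g⁻¹ u
  | mul {u g v h w} : GrGen A u g v → GrGen A v h w → GrGen A u (g * h) w

/-- Arrows from a list. -/
def grMem {G : Type*} (L : List (ℕ × G × ℕ)) (u : ℕ) (g : G) (v : ℕ) : Prop := (u, g, v) ∈ L

theorem GrGen.gauge {G K : Type*} [Group G] [Group K] {A : ℕ → G → ℕ → Prop}
    {B : ℕ → K → ℕ → Prop} (f : G →* K) (r : ℕ → ℕ) (m : ℕ → K)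
    (h : ∀ u g v, A u g v → GrGen B (r u) (m u * f g * (m v)⁻¹) (r v)) {u g v}
    (hg : GrGen A u g v) : GrGen B (r u) (m u * f g * (m v)⁻¹) (r v) := by
  induction hg with
  | of h' => exact h _ _ _ h'
  | one u => simpa using GrGen.one (A := B) (r u)
  | inv _ ih =>
    have := ih.inv
    simpa [mul_assoc] using this
  | mul _ _ ih1 ih2 =>
    have := ih1.mul ih2
    simpa [mul_assoc] using this

theorem GrGen.map {G K : Type*} [Group G] [Group K] {A : ℕ → G → ℕ → Prop}
    {B : ℕ → K → ℕ → Prop} (f : G →* K) (r : ℕ → ℕ)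
    (h : ∀ u g v, A u g v → GrGen B (r u) (f g) (r v)) {u g v}
    (hg : GrGen A u g v) : GrGen B (r u) (f g) (r v) := by
  have := GrGen.gauge (B := B) f r (fun _ => 1) (by simpa using h) hg
  simpa using this

theorem GrGen.mono {G : Type*} [Group G] {A B : ℕ → G → ℕ → Prop}
    (h : ∀ u g v, A u g v → GrGen B u g v) {u g v}
    (hg : GrGen A u g v) : GrGen B u g v :=
  GrGen.map (MonoidHom.id G) id h hg

theorem GrGen.congr {G : Type*} [Group G] {A : ℕ → G → ℕ → Prop} {u g v g'}
    (hg : GrGen A u g v) (h : g = g') : GrGen A u g' v := h ▸ hg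

theorem GrGen.exists_leave {G : Type*} [Group G] {A : ℕ → G → ℕ → Prop} {e g e'}
    (hg : GrGen A e g e') (hne : e ≠ e') :
    ∃ f k, f ≠ e ∧ (A e k f ∨ A f k⁻¹ e) := by
  by_contra hcon
  push Not at hcon
  have key : ∀ u g v, GrGen A u g v → (u = e ↔ v = e) := by
    intro u g v h
    induction h with
    | @of u g v h =>
      constructor
      · rintro rfl
        by_contra hv
        exact (hcon v g hv).1 h
      · rintro rfl
        by_contra hv
        exact (hcon u g⁻¹ hv).2 (by simpa using h)
    | one u => rfl
    | inv _ ih => exact ih.symm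
    | mul _ _ ih1 ih2 => exact ih1.trans ih2
  exact hne ((key _ _ _ hg).1 rfl).symm

theorem gr_exchange {G : Type*} [Group G] (n : ℕ) : ∀ (L : List (ℕ × G × ℕ)), L.length = n →
    ∀ (e : ℕ) (g : G) (e' : ℕ), e ≠ e' → GrGen (grMem L) e g e' →
    ∃ L' : List (ℕ × G × ℕ), L'.length + 1 = L.length ∧
      (∀ u c v, GrGen (grMem L) u c v → GrGen (grMem ((e, g, e') :: L')) u c v) ∧
      (∀ u c v, grMem L' u c v → GrGen (grMem L) u c v) := by
  induction n with
  | zero =>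
    intro L hL e g e' hne hg
    obtain ⟨f, k, _, h⟩ := hg.exists_leave hne
    have : L = [] := List.length_eq_zero_iff.mp hL
    subst this
    simp [grMem] at h
  | succ n ih =>
    intro L hL e g e' hne hg
    obtain ⟨f, k, hfe, hx⟩ := hg.exists_leave hne
    have hkL : GrGen (grMem L) e k f := by
      rcases hx with h | h
      · exact .of h
      · simpa using (GrGen.of h).inv
    have hM : ∃ M : List (ℕ × G × ℕ), M.length = n ∧ (∀ a ∈ M, a ∈ L) ∧
        ∀ u c v, grMem L u c v → (u, c, v) ∈ M ∨ (u = e ∧ c = k ∧ v = f) ∨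
          (u = f ∧ c = k⁻¹ ∧ v = e) := by
      have aux : ∀ x ∈ L, ∃ M : List (ℕ × G × ℕ), M.length = n ∧ (∀ a ∈ M, a ∈ L) ∧
          ∀ a ∈ L, a ∈ M ∨ a = x := by
        intro x hx
        obtain ⟨s, t, rfl⟩ := List.append_of_mem hx
        refine ⟨s ++ t, ?_, ?_, ?_⟩
        · simp at hL ⊢; omega
        · intro a ha; simp at ha ⊢; tauto
        · intro a ha; simp at ha ⊢; tauto
      rcases hx with h | h
      · obtain ⟨M, h1, h2, h3⟩ := aux _ h
        refine ⟨M, h1, h2, fun u c v h' => ?_⟩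
        have := h3 _ h'
        simp only [Prod.mk.injEq] at this
        tauto
      · obtain ⟨M, h1, h2, h3⟩ := aux _ h
        refine ⟨M, h1, h2, fun u c v h' => ?_⟩
        have := h3 _ h'
        simp only [Prod.mk.injEq] at this
        tauto
    obtain ⟨M, hMn, hML, hLM⟩ := hM
    let r : ℕ → ℕ := fun y => if y = f then e else y
    let m : ℕ → G := fun y => if y = f then k else 1
    have hrf : r f = e := by simp [r]
    have hmf : m f = k := by simp [m]
    have hr : ∀ y, y ≠ f → r y = y := fun y hy => by simp [r, hy]
    have hm : ∀ y, y ≠ f → m y = 1 := fun y hy => by simp [m, hy]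
    let M0 : List (ℕ × G × ℕ) := M.map (fun a => (r a.1, m a.1 * a.2.1 * (m a.2.2)⁻¹, r a.2.2))
    have hM0n : M0.length = n := by simp [M0, hMn]
    have hM0 : ∀ u c v, (u, c, v) ∈ M → grMem M0 (r u) (m u * c * (m v)⁻¹) (r v) := by
      intro u c v h
      exact List.mem_map.2 ⟨_, h, rfl⟩
    have R : ∀ u c v, GrGen (grMem L) u c v →
        GrGen (grMem M0) (r u) (m u * c * (m v)⁻¹) (r v) := by
      intro u c v h
      refine GrGen.gauge (MonoidHom.id G) r m ?_ h
      intro u c v h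
      rcases hLM u c v h with h | ⟨rfl, rfl, rfl⟩ | ⟨rfl, rfl, rfl⟩
      · exact .of (hM0 _ _ _ h)
      · rw [hrf, hmf, hr _ hfe.symm, hm _ hfe.symm]
        simpa using GrGen.one _
      · rw [hrf, hmf, hr _ hfe.symm, hm _ hfe.symm]
        simpa using GrGen.one _
    have T : ∀ B : ℕ → G → ℕ → Prop, GrGen B e k f → ∀ y, GrGen B (r y) (m y) y := by
      intro B hB y
      by_cases hy : y = f
      · subst hy; rw [hrf, hmf]; exact hB
      · rw [hr _ hy, hm _ hy]; exact .one _
    have S : ∀ B : ℕ → G → ℕ → Prop, GrGen B e k f →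
        (∀ u c v, grMem M0 u c v → GrGen B u c v) →
        ∀ u c v, GrGen (grMem L) u c v → GrGen B u c v := by
      intro B hB hB0 u c v h
      refine GrGen.mono ?_ h
      intro u c v h
      rcases hLM u c v h with h | ⟨rfl, rfl, rfl⟩ | ⟨rfl, rfl, rfl⟩
      · exact (((T B hB u).inv.mul (hB0 _ _ _ (hM0 _ _ _ h))).mul (T B hB v)).congr (by group)
      · exact hB
      · exact hB.inv
    have hM0L : ∀ u c v, grMem M0 u c v → GrGen (grMem L) u c v := by
      intro u c v h
      obtain ⟨⟨u', c', v'⟩, ha, hh⟩ := List.mem_map.1 h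
      simp only [Prod.mk.injEq] at hh
      obtain ⟨rfl, rfl, rfl⟩ := hh
      exact ((T _ hkL u').mul (.of (hML _ ha))).mul (T _ hkL v').inv
    have hR := R _ _ _ hg
    rw [hr _ hfe.symm, hm _ hfe.symm] at hR
    by_cases hf : e' = f
    · subst hf
      rw [hrf, hmf] at hR
      refine ⟨M0, by omega, ?_, hM0L⟩
      have h0 : ∀ u c v, grMem M0 u c v → GrGen (grMem ((e, g, e') :: M0)) u c v :=
        fun u c v h => .of (List.mem_cons_of_mem _ h)
      refine S _ ?_ h0
      have h1 : GrGen (grMem ((e, g, e') :: M0)) e g e' := .of List.mem_cons_self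
      exact ((GrGen.mono h0 hR).inv.mul h1).congr (by group)
    · rw [hr _ hf, hm _ hf] at hR
      have hR' := hR.congr (g' := g) (by simp)
      obtain ⟨M', h1, h2, h3⟩ := ih M0 hM0n e g e' hne hR'
      refine ⟨(e, k, f) :: M', by simp; omega, ?_, ?_⟩
      · refine S _ (.of (by simp [grMem])) ?_
        intro u c v h
        refine GrGen.mono ?_ (h2 u c v (.of h))
        intro u c v h
        apply GrGen.of
        simp only [grMem, List.mem_cons] at h ⊢
        tauto
      · intro u c v h
        rcases List.mem_cons.1 h with h | h
        · simp only [Prod.mk.injEq] at h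
          obtain ⟨rfl, rfl, rfl⟩ := h
          exact hkL
        · exact GrGen.mono hM0L (h3 _ _ _ h)

/-- All arrows are loops or have their endpoints in `V`. -/
def grSupp {G : Type*} (V : Finset ℕ) (L : List (ℕ × G × ℕ)) : Prop :=
  ∀ u g v, grMem L u g v → u = v ∨ (u ∈ V ∧ v ∈ V)

theorem grSupp.gen {G : Type*} [Group G] {V : Finset ℕ} {L : List (ℕ × G × ℕ)} (h : grSupp V L)
    {u g v} (hg : GrGen (grMem L) u g v) : u = v ∨ (u ∈ V ∧ v ∈ V) := by
  induction hg with
  | of h' => exact h _ _ _ h'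
  | one u => exact .inl rfl
  | inv _ ih => exact ih.imp Eq.symm And.symm
  | mul _ _ ih1 ih2 =>
    rcases ih1 with rfl | ih1
    · exact ih2
    · rcases ih2 with rfl | ih2
      · exact .inr ih1
      · exact .inr ⟨ih1.1, ih2.2⟩

/-- Identification of two vertices. -/
def grRet (e e' : ℕ) : ℕ → ℕ := fun y => if y = e' then e else y

theorem gr_push {G : Type*} [Group G] {V : Finset ℕ} {L : List (ℕ × G × ℕ)} (h : grSupp V L)
    {e e' : ℕ} (hne : e ≠ e') (he : e ∈ V) :
    ∃ L' : List (ℕ × G × ℕ), L'.length = L.length ∧ grSupp (V.erase e') L' ∧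
      ∀ u c v, GrGen (grMem L) u c v → GrGen (grMem L') (grRet e e' u) c (grRet e e' v) := by
  refine ⟨L.map (fun a => (grRet e e' a.1, a.2.1, grRet e e' a.2.2)), by simp, ?_, ?_⟩
  · intro u g v hm
    obtain ⟨⟨u', c', v'⟩, ha, hh⟩ := List.mem_map.1 hm
    simp only [Prod.mk.injEq] at hh
    obtain ⟨rfl, rfl, rfl⟩ := hh
    have hV : ∀ y ∈ V, grRet e e' y ∈ V.erase e' := by
      intro y hy
      unfold grRet
      split_ifs with h1
      · simp [hne, he]
      · simp [h1, hy]
    rcases h _ _ _ ha with rfl | ⟨h1, h2⟩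
    · exact .inl rfl
    · exact .inr ⟨hV _ h1, hV _ h2⟩
  · intro u c v hg
    refine GrGen.map (MonoidHom.id G) (grRet e e') ?_ hg
    intro u c v hm
    exact .of (List.mem_map.2 ⟨_, hm, rfl⟩)

theorem gr_fold {G : Type*} [Group G] {V : Finset ℕ} {L : List (ℕ × G × ℕ)} (h : grSupp V L)
    {e e' : ℕ} (hne : e ≠ e') (he : e ∈ V) (hg : GrGen (grMem L) e 1 e') :
    ∃ L' : List (ℕ × G × ℕ), L'.length + 1 = L.length ∧ grSupp (V.erase e') L' ∧
      ∀ u c v, GrGen (grMem L) u c v → GrGen (grMem L') (grRet e e' u) c (grRet e e' v) := by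
  obtain ⟨L1, h1, h2, h3⟩ := gr_exchange _ L rfl e 1 e' hne hg
  have hs : grSupp V L1 := fun u g v hm => h.gen (h3 _ _ _ hm)
  obtain ⟨L2, k1, k2, k3⟩ := gr_push hs hne he
  refine ⟨L2, by omega, k2, ?_⟩
  intro u c v hc
  refine GrGen.map (MonoidHom.id G) (grRet e e') ?_ (h2 _ _ _ hc)
  intro u c v hm
  rcases List.mem_cons.1 hm with hm | hm
  · simp only [Prod.mk.injEq] at hm
    obtain ⟨rfl, rfl, rfl⟩ := hm
    simpa [grRet, hne] using GrGen.one _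
  · exact k3 _ _ _ (.of hm)

/-- The arrows labelled by the free product. -/
def grComb {G H : Type*} [Group G] [Group H] (LG : List (ℕ × G × ℕ)) (LH : List (ℕ × H × ℕ))
    (u : ℕ) (c : Monoid.Coprod G H) (v : ℕ) : Prop :=
  (∃ g, grMem LG u g v ∧ c = Coprod.inl g) ∨ (∃ h, grMem LH u h v ∧ c = Coprod.inr h)

/-- Folded graphs: a path labelled 1 is closed. -/
theorem gr_folded {G H : Type*} [Group G] [Group H] {LG : List (ℕ × G × ℕ)}
    {LH : List (ℕ × H × ℕ)} (hG : ∀ e e', GrGen (grMem LG) e 1 e' → e = e')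
    (hH : ∀ e e', GrGen (grMem LH) e 1 e' → e = e') {e e' : ℕ}
    (h : GrGen (grComb LG LH) e 1 e') : e = e' := by
  classical
  open scoped Pointwise in
  let SG : ℕ → ℕ → Set G := fun e e' => {g | GrGen (grMem LG) e g e'}
  let SH : ℕ → ℕ → Set H := fun e e' => {g | GrGen (grMem LH) e g e'}
  have iG : Function.Injective SG := by
    intro e e' h
    apply hG
    have : (1 : G) ∈ SG e' e' := GrGen.one _
    rw [← h] at this
    exact this
  have iH : Function.Injective SH := by
    intro e e' h
    apply hH
    have : (1 : H) ∈ SH e' e' := GrGen.one _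
    rw [← h] at this
    exact this
  have aG : ∀ e g e', GrGen (grMem LG) e g e' → g • SG e' = SG e := by
    intro e g e' h
    funext x
    ext c
    simp only [Pi.smul_apply, Set.mem_smul_set_iff_inv_smul_mem, smul_eq_mul, SG, Set.mem_ofPred_eq]
    constructor
    · intro h'; exact (h.mul h').congr (by group)
    · intro h'; exact h.inv.mul h'
  have aH : ∀ e g e', GrGen (grMem LH) e g e' → g • SH e' = SH e := by
    intro e g e' h
    funext x
    ext c
    simp only [Pi.smul_apply, Set.mem_smul_set_iff_inv_smul_mem, smul_eq_mul, SH, Set.mem_ofPred_eq]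
    constructor
    · intro h'; exact (h.mul h').congr (by group)
    · intro h'; exact h.inv.mul h'
  let X := (ℕ → Set G) ⊕ (ℕ → Set H)
  let jH : (ℕ → Set H) ↪ X := ⟨Sum.inr, Sum.inr_injective⟩
  let fG : (ℕ → Set G) → X := fun s => if h : ∃ e, SG e = s then Sum.inr (SH h.choose) else Sum.inl s
  have fGS : ∀ e, fG (SG e) = Sum.inr (SH e) := by
    intro e
    have h : ∃ e', SG e' = SG e := ⟨e, rfl⟩
    simp only [fG, dif_pos h]
    rw [iG h.choose_spec]
  have fGn : ∀ s, (¬ ∃ e, SG e = s) → fG s = Sum.inl s := by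
    intro s h
    simp only [fG, dif_neg h]
  have fGi : Function.Injective fG := by
    intro s t hst
    by_cases hs : ∃ e, SG e = s
    · obtain ⟨e, rfl⟩ := hs
      by_cases ht : ∃ e, SG e = t
      · obtain ⟨e', rfl⟩ := ht
        rw [fGS, fGS] at hst
        rw [iH (Sum.inr_injective hst)]
      · rw [fGS, fGn t ht] at hst
        cases hst
    · by_cases ht : ∃ e, SG e = t
      · obtain ⟨e', rfl⟩ := ht
        rw [fGS, fGn s hs] at hst
        cases hst
      · rw [fGn s hs, fGn t ht] at hst
        exact Sum.inl_injective hst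
  let jG : (ℕ → Set G) ↪ X := ⟨fG, fGi⟩
  let φ : Monoid.Coprod G H →* Equiv.Perm X := Coprod.lift
    ((Equiv.Perm.viaEmbeddingHom jG).comp (MulAction.toPermHom G (ℕ → Set G)))
    ((Equiv.Perm.viaEmbeddingHom jH).comp (MulAction.toPermHom H (ℕ → Set H)))
  have key : ∀ u c v, GrGen (grComb LG LH) u c v → φ c (jH (SH v)) = jH (SH u) := by
    intro u c v h
    induction h with
    | @of u c v h =>
      rcases h with ⟨g, hg, rfl⟩ | ⟨g, hg, rfl⟩
      · have e1 : ∀ e, jH (SH e) = jG (SG e) := fun e => (fGS e).symm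
        rw [e1, e1]
        simp only [φ, Coprod.lift_apply_inl, MonoidHom.comp_apply,
          Equiv.Perm.viaEmbeddingHom_apply, Equiv.Perm.viaEmbedding_apply,
          MulAction.toPermHom_apply, MulAction.toPerm_apply]
        rw [aG _ _ _ (.of hg)]
      · simp only [φ, Coprod.lift_apply_inr, MonoidHom.comp_apply,
          Equiv.Perm.viaEmbeddingHom_apply, Equiv.Perm.viaEmbedding_apply,
          MulAction.toPermHom_apply, MulAction.toPerm_apply]
        rw [aH _ _ _ (.of hg)]
    | one u => simp
    | inv _ ih => rw [← ih, map_inv, ← Equiv.Perm.mul_apply, inv_mul_cancel, Equiv.Perm.one_apply]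
    | mul _ _ ih1 ih2 => rw [map_mul, Equiv.Perm.mul_apply, ih2, ih1]
  have := key _ _ _ h
  rw [map_one, Equiv.Perm.one_apply] at this
  exact (iH (jH.injective this)).symm

theorem grComb_map {G H : Type*} [Group G] [Group H] {LG LG' : List (ℕ × G × ℕ)}
    {LH LH' : List (ℕ × H × ℕ)} (r : ℕ → ℕ)
    (hG : ∀ u c v, GrGen (grMem LG) u c v → GrGen (grMem LG') (r u) c (r v))
    (hH : ∀ u c v, GrGen (grMem LH) u c v → GrGen (grMem LH') (r u) c (r v))
    {u c v} (h : GrGen (grComb LG LH) u c v) : GrGen (grComb LG' LH') (r u) c (r v) := by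
  refine GrGen.map (MonoidHom.id _) r ?_ h
  rintro u c v (⟨g, hg, rfl⟩ | ⟨g, hg, rfl⟩)
  · exact GrGen.map (Coprod.inl : G →* Monoid.Coprod G H) id
      (fun u c v h => .of (.inl ⟨c, h, rfl⟩)) (hG _ _ _ (.of hg))
  · exact GrGen.map (Coprod.inr : H →* Monoid.Coprod G H) id
      (fun u c v h => .of (.inr ⟨c, h, rfl⟩)) (hH _ _ _ (.of hg))

theorem gr_label {G : Type*} [Group G] {A : ℕ → G → ℕ → Prop} (K : Subgroup G)
    (hK : ∀ u c v, A u c v → c ∈ K) {u c v} (h : GrGen A u c v) : c ∈ K := by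
  induction h with
  | of h => exact hK _ _ _ h
  | one u => exact K.one_mem
  | inv _ ih => exact K.inv_mem ih
  | mul _ _ ih1 ih2 => exact K.mul_mem ih1 ih2

theorem grpRank_le_list {G : Type*} [Group G] (L : List G)
    (h : Subgroup.closure {x | x ∈ L} = ⊤) : grpRank G ≤ L.length := by
  classical
  refine le_trans (Nat.sInf_le ⟨L.toFinset, rfl, ?_⟩) (List.toFinset_card_le L)
  rw [← h]
  congr 1
  ext x
  simp

theorem gr_final {G H : Type*} [Group G] [Group H] {LG : List (ℕ × G × ℕ)}
    {LH : List (ℕ × H × ℕ)} {b : ℕ} (hl : ∀ c, GrGen (grComb LG LH) b c b) :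
    grpRank G ≤ LG.length ∧ grpRank H ≤ LH.length := by
  constructor
  · have := grpRank_le_list (LG.map (fun a => a.2.1)) (by
      rw [eq_top_iff]
      intro g _
      have hg := gr_label ((Subgroup.closure {x | x ∈ LG.map (fun a => a.2.1)}).comap
        (Coprod.fst : Monoid.Coprod G H →* G)) ?_ (hl (Coprod.inl g))
      · simpa using hg
      · rintro u c v (⟨x, hx, rfl⟩ | ⟨x, hx, rfl⟩)
        · rw [Subgroup.mem_comap, Coprod.fst_apply_inl]
          exact Subgroup.subset_closure (List.mem_map.2 ⟨_, hx, rfl⟩)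
        · rw [Subgroup.mem_comap, Coprod.fst_apply_inr]
          exact Subgroup.one_mem _)
    simpa using this
  · have := grpRank_le_list (LH.map (fun a => a.2.1)) (by
      rw [eq_top_iff]
      intro g _
      have hg := gr_label ((Subgroup.closure {x | x ∈ LH.map (fun a => a.2.1)}).comap
        (Coprod.snd : Monoid.Coprod G H →* H)) ?_ (hl (Coprod.inr g))
      · simpa using hg
      · rintro u c v (⟨x, hx, rfl⟩ | ⟨x, hx, rfl⟩)
        · rw [Subgroup.mem_comap, Coprod.snd_apply_inl]
          exact Subgroup.one_mem _
        · rw [Subgroup.mem_comap, Coprod.snd_apply_inr]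
          exact Subgroup.subset_closure (List.mem_map.2 ⟨_, hx, rfl⟩))
    simpa using this

theorem gr_main {G H : Type*} [Group G] [Group H] (n N : ℕ) : ∀ (V : Finset ℕ), V.card = N →
    ∀ (LG : List (ℕ × G × ℕ)) (LH : List (ℕ × H × ℕ)) (b : ℕ),
    grSupp V LG → grSupp V LH → (∀ v ∈ V, ∃ c, GrGen (grComb LG LH) b c v) →
    (∀ c, GrGen (grComb LG LH) b c b) → LG.length + LH.length + 1 ≤ n + V.card →
    grpRank G + grpRank H ≤ n := by
  induction N with
  | zero =>
    intro V hV LG LH b sG sH hr hl hn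
    have := gr_final hl
    omega
  | succ N ih =>
    intro V hV LG LH b sG sH hr hl hn
    have step : ∀ (e e' : ℕ), e ≠ e' → e ∈ V → e' ∈ V →
        ∀ (LG' : List (ℕ × G × ℕ)) (LH' : List (ℕ × H × ℕ)),
        LG'.length + LH'.length + 1 = LG.length + LH.length →
        grSupp (V.erase e') LG' → grSupp (V.erase e') LH' →
        (∀ u c v, GrGen (grMem LG) u c v → GrGen (grMem LG') (grRet e e' u) c (grRet e e' v)) →
        (∀ u c v, GrGen (grMem LH) u c v → GrGen (grMem LH') (grRet e e' u) c (grRet e e' v)) →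
        grpRank G + grpRank H ≤ n := by
      intro e e' hne he he' LG' LH' hlen sG' sH' mG mH
      have hc : (V.erase e').card = N := by rw [Finset.card_erase_of_mem he']; omega
      refine ih (V.erase e') hc LG' LH' (grRet e e' b) sG' sH' ?_ ?_ (by omega)
      · intro v hv
        obtain ⟨hv1, hv2⟩ := Finset.mem_erase.1 hv
        obtain ⟨c, hc⟩ := hr v hv2
        have := grComb_map _ mG mH hc
        refine ⟨c, ?_⟩
        rwa [show grRet e e' v = v by simp [grRet, hv1]] at this
      · intro c
        exact grComb_map _ mG mH (hl c)
    by_cases fG : ∀ e e', GrGen (grMem LG) e 1 e' → e = e'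
    · by_cases fH : ∀ e e', GrGen (grMem LH) e 1 e' → e = e'
      · have hV1 : V.card ≤ 1 := by
          have hb : ∀ v ∈ V, b = v := by
            intro v hv
            obtain ⟨c, hc⟩ := hr v hv
            exact gr_folded fG fH (((hl c⁻¹).mul hc).congr (by group))
          exact Finset.card_le_one.2 fun u hu v hv => (hb u hu).symm.trans (hb v hv)
        have := gr_final hl
        omega
      · push Not at fH
        obtain ⟨e, e', hg, hne⟩ := fH
        obtain ⟨he, he'⟩ := (sH.gen hg).resolve_left hne
        obtain ⟨LH', h1, h2, h3⟩ := gr_fold sH hne he hg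
        obtain ⟨LG', k1, k2, k3⟩ := gr_push sG hne he
        exact step e e' hne he he' LG' LH' (by omega) k2 h2 k3 h3
    · push Not at fG
      obtain ⟨e, e', hg, hne⟩ := fG
      obtain ⟨he, he'⟩ := (sG.gen hg).resolve_left hne
      obtain ⟨LG', h1, h2, h3⟩ := gr_fold sG hne he hg
      obtain ⟨LH', k1, k2, k3⟩ := gr_push sH hne he
      exact step e e' hne he he' LG' LH' (by omega) h2 k2 h3 k3

theorem grSupp.cons {G : Type*} {V : Finset ℕ} {L : List (ℕ × G × ℕ)} (h : grSupp V L)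
    {e e' : ℕ} (g : G) (he : e ∈ V) (he' : e' ∈ V) : grSupp V ((e, g, e') :: L) := by
  intro u c v hm
  rcases List.mem_cons.1 hm with hm | hm
  · simp only [Prod.mk.injEq] at hm
    obtain ⟨rfl, rfl, rfl⟩ := hm
    exact .inr ⟨he, he'⟩
  · exact h _ _ _ hm

theorem grSupp.mono {G : Type*} {V W : Finset ℕ} {L : List (ℕ × G × ℕ)} (h : grSupp V L)
    (hVW : V ⊆ W) : grSupp W L :=
  fun _ _ _ hm => (h _ _ _ hm).imp_right fun h => ⟨hVW h.1, hVW h.2⟩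

theorem gr_extend {G H : Type*} [Group G] [Group H] (c : Monoid.Coprod G H) :
    ∀ (V : Finset ℕ) (LG : List (ℕ × G × ℕ)) (LH : List (ℕ × H × ℕ)) (e e' : ℕ),
    grSupp V LG → grSupp V LH → e ∈ V → e' ∈ V →
    ∃ (V' : Finset ℕ) (LG' : List (ℕ × G × ℕ)) (LH' : List (ℕ × H × ℕ)),
      V ⊆ V' ∧ grSupp V' LG' ∧ grSupp V' LH' ∧
      (∀ u d v, GrGen (grComb LG LH) u d v → GrGen (grComb LG' LH') u d v) ∧
      GrGen (grComb LG' LH') e c e' ∧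
      (∀ v ∈ V', ∃ u ∈ V, ∃ d, GrGen (grComb LG' LH') u d v) ∧
      LG'.length + LH'.length + V.card ≤ LG.length + LH.length + V'.card + 1 := by
  induction c using Coprod.induction_on with
  | inl g =>
    intro V LG LH e e' sG sH he he'
    refine ⟨V, (e, g, e') :: LG, LH, subset_rfl, sG.cons g he he', sH, ?_, ?_,
      fun v hv => ⟨v, hv, 1, .one v⟩, by simp; omega⟩
    · intro u d v h
      exact grComb_map id (fun u c v h => GrGen.mono
        (fun u c v h => .of (List.mem_cons_of_mem _ h)) h) (fun u c v h => h) h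
    · exact .of (.inl ⟨g, List.mem_cons_self, rfl⟩)
  | inr g =>
    intro V LG LH e e' sG sH he he'
    refine ⟨V, LG, (e, g, e') :: LH, subset_rfl, sG, sH.cons g he he', ?_, ?_,
      fun v hv => ⟨v, hv, 1, .one v⟩, by simp; omega⟩
    · intro u d v h
      exact grComb_map id (fun u c v h => h) (fun u c v h => GrGen.mono
        (fun u c v h => .of (List.mem_cons_of_mem _ h)) h) h
    · exact .of (.inr ⟨g, List.mem_cons_self, rfl⟩)
  | mul x y ihx ihy =>
    intro V LG LH e e' sG sH he he'
    obtain ⟨f, hf⟩ := Infinite.exists_notMem_finset V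
    have hVf : V ⊆ insert f V := Finset.subset_insert _ _
    obtain ⟨V1, G1, H1, a1, a2, a3, a4, a5, a6, a7⟩ := ihx (insert f V) LG LH e f
      (sG.mono hVf) (sH.mono hVf) (hVf he) (Finset.mem_insert_self _ _)
    obtain ⟨V2, G2, H2, b1, b2, b3, b4, b5, b6, b7⟩ := ihy V1 G1 H1 f e' a2 a3
      (a1 (Finset.mem_insert_self _ _)) (a1 (hVf he'))
    refine ⟨V2, G2, H2, (hVf.trans a1).trans b1, b2, b3, fun u d v h => b4 _ _ _ (a4 _ _ _ h),
      (b4 _ _ _ a5).mul b5, ?_, ?_⟩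
    · intro v hv
      obtain ⟨u, hu, d, hd⟩ := b6 v hv
      obtain ⟨w, hw, d', hd'⟩ := a6 u hu
      have h2 := (b4 _ _ _ hd').mul hd
      rcases Finset.mem_insert.1 hw with rfl | hw
      · exact ⟨e, he, _, (b4 _ _ _ a5).mul h2⟩
      · exact ⟨w, hw, _, h2⟩
    · rw [Finset.card_insert_of_notMem hf] at a7
      omega

theorem gr_start {G H : Type*} [Group G] [Group H] (L : List (Monoid.Coprod G H)) :
    ∃ (V : Finset ℕ) (LG : List (ℕ × G × ℕ)) (LH : List (ℕ × H × ℕ)),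
      0 ∈ V ∧ grSupp V LG ∧ grSupp V LH ∧
      (∀ c ∈ L, GrGen (grComb LG LH) 0 c 0) ∧
      (∀ v ∈ V, ∃ d, GrGen (grComb LG LH) 0 d v) ∧
      LG.length + LH.length + 1 ≤ L.length + V.card := by
  induction L with
  | nil =>
    refine ⟨{0}, [], [], by simp, ?_, ?_, by simp, ?_, by simp⟩
    · intro u g v h; simp [grMem] at h
    · intro u g v h; simp [grMem] at h
    · intro v hv
      rw [Finset.mem_singleton.1 hv]
      exact ⟨1, .one 0⟩
  | cons c L ih =>
    obtain ⟨V, LG, LH, h0, sG, sH, hL, hr, hn⟩ := ih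
    obtain ⟨V1, G1, H1, a1, a2, a3, a4, a5, a6, a7⟩ := gr_extend c V LG LH 0 0 sG sH h0 h0
    refine ⟨V1, G1, H1, a1 h0, a2, a3, ?_, ?_, by simp; omega⟩
    · intro d hd
      rcases List.mem_cons.1 hd with rfl | hd
      · exact a5
      · exact a4 _ _ _ (hL d hd)
    · intro v hv
      obtain ⟨u, hu, d, hd⟩ := a6 v hv
      obtain ⟨d', hd'⟩ := hr u hu
      exact ⟨_, (a4 _ _ _ hd').mul hd⟩

theorem gr_grushko {G H : Type*} [Group G] [Group H] (S : Finset (Monoid.Coprod G H))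
    (hS : Subgroup.closure (S : Set (Monoid.Coprod G H)) = ⊤) :
    grpRank G + grpRank H ≤ S.card := by
  obtain ⟨V, LG, LH, h0, sG, sH, hL, hr, hn⟩ := gr_start S.toList
  rw [Finset.length_toList] at hn
  refine gr_main S.card V.card V rfl LG LH 0 sG sH hr ?_ hn
  intro c
  have hc : c ∈ Subgroup.closure (S : Set (Monoid.Coprod G H)) := by rw [hS]; trivial
  induction hc using Subgroup.closure_induction with
  | mem x hx => exact hL x (by simpa using hx)
  | one => exact .one 0
  | mul x y _ _ hx hy => exact hx.mul hy
  | inv x _ hx => exact hx.inv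

theorem grpRank_spec (G : Type*) [Group G] [Group.FG G] :
    ∃ S : Finset G, S.card = grpRank G ∧ Subgroup.closure (S : Set G) = ⊤ := by
  obtain ⟨S, hS⟩ := (Group.FG.out : (⊤ : Subgroup G).FG)
  exact Nat.sInf_mem (s := {k : ℕ | ∃ S : Finset G, S.card = k ∧
    Subgroup.closure (S : Set G) = ⊤}) ⟨_, S, rfl, hS⟩

/-- For finitely generated groups `G` and `H`, the rank of the free product `G ∗ H`
equals the rank of `G` plus the rank of `H`: `n(G ⋆ H) = n(G) + n(H)`. -/
theorem rank_coprod (G H : Type*) [Group G] [Group H] [Group.FG G] [Group.FG H] :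
    grpRank (Monoid.Coprod G H) = grpRank G + grpRank H := by
  classical
  obtain ⟨SG, cG, hG⟩ := grpRank_spec G
  obtain ⟨SH, cH, hH⟩ := grpRank_spec H
  have hU : Subgroup.closure ((SG.image (Coprod.inl : G →* Monoid.Coprod G H) ∪
      SH.image (Coprod.inr : H →* Monoid.Coprod G H) : Finset (Monoid.Coprod G H)) :
      Set (Monoid.Coprod G H)) = ⊤ := by
    rw [Finset.coe_union, Finset.coe_image, Finset.coe_image, Subgroup.closure_union,
      ← MonoidHom.map_closure, ← MonoidHom.map_closure, hG, hH, ← MonoidHom.range_eq_map,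
      ← MonoidHom.range_eq_map, Coprod.range_inl_sup_range_inr]
  apply le_antisymm
  · refine le_trans (Nat.sInf_le ⟨_, rfl, hU⟩ : grpRank (Monoid.Coprod G H) ≤ _)
      ((Finset.card_union_le _ _).trans ?_)
    rw [← cG, ← cH]
    exact add_le_add Finset.card_image_le Finset.card_image_le
  · refine le_csInf ⟨_, _, rfl, hU⟩ ?_
    rintro k ⟨S, rfl, hS⟩
    exact gr_grushko S hS
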